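/- arXiv:2206.14234 — 2 statements merged into one kernel-verified Lean document; each statement's English description precedes it below -/
import Mathlib

section
/- The SPO+ loss is an upper bound on the unambiguous regret (and hence on the regret): for every ĉ ∈ ℝ^d, every true cost c ∈ ℝ^d, and every fixed w̄ ∈ W*(c), one has l_SPO+(ĉ, c) = −min_{w ∈ S}(2ĉ − c)ᵀw + 2ĉᵀw̄ − z*(c) ≥ max_{w ∈ W*(ĉ)} cᵀw − z*(c). -/
open scoped RealInnerProductSpace

/-- The optimal value `z*(c) = min_{w ∈ S} cᵀw` of the linear objective `c` over the
nonempty finite feasible set `S`. -/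
noncomputable def zstar {d : ℕ} (S : Finset (EuclideanSpace ℝ (Fin d)))
    (hS : S.Nonempty) (c : EuclideanSpace ℝ (Fin d)) : ℝ :=
  S.inf' hS fun w => ⟪c, w⟫

/-- The set of optimal solutions `W*(c) = {w ∈ S : cᵀw = z*(c)}`. -/
def Wstar {d : ℕ} (S : Finset (EuclideanSpace ℝ (Fin d)))
    (hS : S.Nonempty) (c : EuclideanSpace ℝ (Fin d)) : Set (EuclideanSpace ℝ (Fin d)) :=
  {w | w ∈ S ∧ ⟪c, w⟫ = zstar S hS c}

/-- The SPO+ loss `l_SPO+(ĉ, c) = −min_{w ∈ S}(2ĉ − c)ᵀw + 2 ĉᵀw̄ − z*(c)`, for a fixed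
optimal solution `w̄ ∈ W*(c)` of the true cost `c`. -/
noncomputable def lSPOplus {d : ℕ} (S : Finset (EuclideanSpace ℝ (Fin d))) (hS : S.Nonempty)
    (chat c wbar : EuclideanSpace ℝ (Fin d)) : ℝ :=
  -(S.inf' hS fun w => ⟪(2 : ℝ) • chat - c, w⟫) + 2 * ⟪chat, wbar⟫ - zstar S hS c

theorem zstar_le_inner {d : ℕ} {S : Finset (EuclideanSpace ℝ (Fin d))} (hS : S.Nonempty)
    (c : EuclideanSpace ℝ (Fin d)) {w : EuclideanSpace ℝ (Fin d)} (hw : w ∈ S) :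
    zstar S hS c ≤ ⟪c, w⟫ :=
  Finset.inf'_le (fun w => ⟪c, w⟫) hw

theorem Wstar_nonempty {d : ℕ} (S : Finset (EuclideanSpace ℝ (Fin d))) (hS : S.Nonempty)
    (c : EuclideanSpace ℝ (Fin d)) : (Wstar S hS c).Nonempty := by
  obtain ⟨w, hw, hmin⟩ := S.exists_mem_eq_inf' hS fun w => ⟪c, w⟫
  exact ⟨w, hw, hmin.symm⟩

/-- The SPO+ loss upper-bounds the unambiguous regret: for every `ĉ`, every true cost `c`, and
every fixed `w̄ ∈ W*(c)`, `l_SPO+(ĉ, c) ≥ max_{w ∈ W*(ĉ)} cᵀw − z*(c)`. -/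
theorem spoPlus_ge_unambiguous_regret {d : ℕ} (S : Finset (EuclideanSpace ℝ (Fin d)))
    (hS : S.Nonempty) (chat c wbar : EuclideanSpace ℝ (Fin d))
    (hwbar : wbar ∈ Wstar S hS c) :
    lSPOplus S hS chat c wbar ≥
      sSup ((fun w => ⟪c, w⟫) '' Wstar S hS chat) - zstar S hS c := by
  have hbound : sSup ((fun w => ⟪c, w⟫) '' Wstar S hS chat) ≤
      -zstar S hS ((2 : ℝ) • chat - c) + 2 * ⟪chat, wbar⟫ := by
    refine csSup_le ((Wstar_nonempty S hS chat).image _) ?_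
    rintro _ ⟨w, ⟨hw, hopt⟩, rfl⟩
    have hshift := zstar_le_inner hS ((2 : ℝ) • chat - c) hw
    have hchat := zstar_le_inner hS chat hwbar.1
    rw [inner_sub_left, real_inner_smul_left] at hshift
    linarith
  exact sub_le_sub_right hbound _
end

section
/- The vector 2(w̄ − w′) is a subgradient of the SPO+ loss at ĉ: for every ĉ ∈ ℝ^d, every w̄ ∈ W*(c), and every w′ ∈ W*(2ĉ − c), one has l_SPO+(c′, c) ≥ l_SPO+(ĉ, c) + ⟨2(w̄ − w′), c′ − ĉ⟩ for all c′ ∈ ℝ^d. -/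
open scoped RealInnerProductSpace

/-- The vector `2(w̄ − w′)` is a subgradient of the SPO+ loss at `ĉ`: for every `ĉ`,
every `w̄ ∈ W*(c)`, and every `w′ ∈ W*(2ĉ − c)`, one has
`l_SPO+(c′, c) ≥ l_SPO+(ĉ, c) + ⟨2(w̄ − w′), c′ − ĉ⟩` for all `c′`. -/
theorem spoPlus_subgradient {d : ℕ} (S : Finset (EuclideanSpace ℝ (Fin d))) (hS : S.Nonempty)
    (chat c wbar w' : EuclideanSpace ℝ (Fin d)) (hwbar : wbar ∈ Wstar S hS c)
    (hw' : w' ∈ Wstar S hS ((2 : ℝ) • chat - c)) :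
    ∀ c' : EuclideanSpace ℝ (Fin d),
      lSPOplus S hS c' c wbar ≥
        lSPOplus S hS chat c wbar + ⟪(2 : ℝ) • (wbar - w'), c' - chat⟫ := by
  intro c'
  obtain ⟨hmem, hopt⟩ := hw'
  have hle : zstar S hS ((2 : ℝ) • c' - c) ≤ ⟪(2 : ℝ) • c' - c, w'⟫ :=
    Finset.inf'_le (fun w => ⟪(2 : ℝ) • c' - c, w⟫) hmem
  change -zstar S hS ((2 : ℝ) • c' - c) + 2 * ⟪c', wbar⟫ - zstar S hS c ≥
    -zstar S hS ((2 : ℝ) • chat - c) + 2 * ⟪chat, wbar⟫ - zstar S hS c +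
      ⟪(2 : ℝ) • (wbar - w'), c' - chat⟫
  rw [← hopt]
  simp only [inner_sub_left, inner_sub_right, real_inner_smul_left,
    real_inner_comm c' wbar, real_inner_comm chat wbar,
    real_inner_comm c' w', real_inner_comm chat w'] at hle ⊢
  linarith
end
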